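/- Let φ = (1+√5)/2 and let v be a real number with 1 + 3v + 4v² + 2v³ + v⁴ ≠ 0. Set w = v·(1 − 2v + 4v² − 3v³ + v⁴)/(1 + 3v + 4v² + 2v³ + v⁴). Then (1 − φ⁵·w)·(φ + v)⁵ = (φ⁵ + w)·(1 − φ·v)⁵. (Equivalently: if u⁵ = w, then ((1 − φv)/(φ + v))⁵ = (1 − φ⁵u⁵)/(φ⁵ + u⁵), which is the Chan–Cooper–Liaw inversion of Ramanujan's modular equation relating u = R(q) and v = R(q⁵).) -/

import Mathlib

/-!
Write the modular equation as `w = v N(v) / D(v)`. For each root `α` of `x² = x + 1`, the quintic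
`D(v) - α⁵ v N(v)` is the perfect fifth power `(1 - α v)⁵`. Taking `α = φ`, and `α = 1 - φ = -1/φ`
scaled by `φ⁵`, gives `1 - φ⁵ w = (1 - φ v)⁵ / D(v)` and `φ⁵ + w = (φ + v)⁵ / D(v)`.
-/

theorem pow_succ_eq_fib_mul_add_fib {R : Type*} [Semiring R] {φ : R} (hφ : φ ^ 2 = φ + 1) (n : ℕ) :
    φ ^ (n + 1) = Nat.fib (n + 1) * φ + Nat.fib n := by
  induction n with
  | zero => simp
  | succ n ih =>
    calc
      φ ^ (n + 2) = (Nat.fib (n + 1) * φ + Nat.fib n) * φ := by rw [pow_succ, ih]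
      _ = Nat.fib (n + 1) * (φ + 1) + Nat.fib n * φ := by rw [add_mul, mul_assoc, ← sq, hφ]
      _ = Nat.fib (n + 2) * φ + Nat.fib (n + 1) := by
        rw [Nat.fib_add_two, Nat.cast_add, mul_add, add_mul, mul_one]
        abel

namespace RogersRamanujan

section CommRing

variable {R : Type*} [CommRing R]

/-- The quartic `N` in the numerator of Ramanujan's modular equation `u⁵ = v N(v) / D(v)` relating
`u = R(q)` and `v = R(q⁵)`; the factor `v` is not included. -/
def modularNum (v : R) : R :=
  1 - 2 * v + 4 * v ^ 2 - 3 * v ^ 3 + v ^ 4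

/-- The denominator `D` of Ramanujan's modular equation `u⁵ = v N(v) / D(v)` relating
`u = R(q)` and `v = R(q⁵)`. -/
def modularDenom (v : R) : R :=
  1 + 3 * v + 4 * v ^ 2 + 2 * v ^ 3 + v ^ 4

variable {φ : R}

theorem modularDenom_sub_pow_five_mul_modularNum (hφ : φ ^ 2 = φ + 1) (v : R) :
    modularDenom v - φ ^ 5 * (v * modularNum v) = (1 - φ * v) ^ 5 := by
  have φ_pow_three : φ ^ 3 = 2 * φ + 1 := by
    simpa [Nat.fib_add_two] using pow_succ_eq_fib_mul_add_fib hφ 2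
  have φ_pow_four : φ ^ 4 = 3 * φ + 2 := by
    simpa [Nat.fib_add_two] using pow_succ_eq_fib_mul_add_fib hφ 3
  have φ_pow_five : φ ^ 5 = 5 * φ + 3 := by
    simpa [Nat.fib_add_two] using pow_succ_eq_fib_mul_add_fib hφ 4
  calc
    modularDenom v - φ ^ 5 * (v * modularNum v)
    _ = 1 - 5 * φ * v + 10 * (φ + 1) * v ^ 2 - 10 * (2 * φ + 1) * v ^ 3
          + 5 * (3 * φ + 2) * v ^ 4 - (5 * φ + 3) * v ^ 5 := by
      rw [φ_pow_five, modularDenom, modularNum]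
      ring
    _ = (1 - φ * v) ^ 5 := by
      rw [← hφ, ← φ_pow_three, ← φ_pow_four, ← φ_pow_five]
      ring

theorem pow_five_mul_modularDenom_add_modularNum (hφ : φ ^ 2 = φ + 1) (v : R) :
    φ ^ 5 * modularDenom v + v * modularNum v = (φ + v) ^ 5 := by
  have conj_sq : (1 - φ) ^ 2 = (1 - φ) + 1 := by linear_combination hφ
  have mul_conj : φ * (1 - φ) = -1 := by linear_combination -hφ
  have pow_five_mul_conj : φ ^ 5 * (1 - φ) ^ 5 = -1 := by
    rw [← mul_pow, mul_conj]
    norm_num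
  calc
    φ ^ 5 * modularDenom v + v * modularNum v
    _ = φ ^ 5 * (modularDenom v - (1 - φ) ^ 5 * (v * modularNum v)) := by
      linear_combination v * modularNum v * pow_five_mul_conj
    _ = (φ * (1 - (1 - φ) * v)) ^ 5 := by
      rw [modularDenom_sub_pow_five_mul_modularNum conj_sq, mul_pow]
    _ = (φ + v) ^ 5 := by
      congr 1
      linear_combination -v * mul_conj

end CommRing

variable {K : Type*} [Field K] {φ v : K}

theorem one_sub_pow_five_mul_modular_div (hφ : φ ^ 2 = φ + 1) (hv : modularDenom v ≠ 0) :
    1 - φ ^ 5 * (v * modularNum v / modularDenom v) = (1 - φ * v) ^ 5 / modularDenom v := by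
  rw [← modularDenom_sub_pow_five_mul_modularNum hφ, sub_div, div_self hv, mul_div_assoc (φ ^ 5)]

theorem pow_five_add_modular_div (hφ : φ ^ 2 = φ + 1) (hv : modularDenom v ≠ 0) :
    φ ^ 5 + v * modularNum v / modularDenom v = (φ + v) ^ 5 / modularDenom v := by
  rw [← pow_five_mul_modularDenom_add_modularNum hφ, add_div, mul_div_cancel_right₀ _ hv]

end RogersRamanujan

open RogersRamanujan in
theorem stmt_7_general {K : Type*} [Field K] {φ v : K} (hφ : φ ^ 2 = φ + 1)
    (hv : modularDenom v ≠ 0) :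
    let w : K := v * modularNum v / modularDenom v
    (1 - φ ^ 5 * w) * (φ + v) ^ 5 = (φ ^ 5 + w) * (1 - φ * v) ^ 5 := by
  intro w
  rw [one_sub_pow_five_mul_modular_div hφ hv, pow_five_add_modular_div hφ hv]
  ring

theorem stmt_7 (v : ℝ) (hv : 1 + 3 * v + 4 * v ^ 2 + 2 * v ^ 3 + v ^ 4 ≠ 0) :
    let φ : ℝ := (1 + Real.sqrt 5) / 2
    let w : ℝ := v * (1 - 2 * v + 4 * v ^ 2 - 3 * v ^ 3 + v ^ 4) /
      (1 + 3 * v + 4 * v ^ 2 + 2 * v ^ 3 + v ^ 4)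
    (1 - φ ^ 5 * w) * (φ + v) ^ 5 = (φ ^ 5 + w) * (1 - φ * v) ^ 5 :=
  stmt_7_general Real.goldenRatio_sq hv
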